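/- Let G be a proper circular-arc graph and H any finite simple graph such that the closed neighborhood hypergraphs N[G] and N[H] are isomorphic as hypergraphs with multiplicities — that is, there are bijections φ, ψ : V(G) → V(H) with φ(N_G[v]) = N_H[ψ(v)] for every v ∈ V(G). Then the graphs G and H are isomorphic. -/

import Mathlib

open Set

/-- The closed neighborhood of a vertex: the vertex together with its neighbors. -/
def ClosedNbhd {V : Type*} (G : SimpleGraph V) (v : V) : Set V :=
  {u | u = v ∨ G.Adj u v}

/-- `S` is an interval (order-convex set) with respect to the order relation `r`. -/
def IsIntervalWrt {α : Type*} (r : α → α → Prop) (S : Set α) : Prop :=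
  ∀ x y z, r x y → r y z → x ∈ S → z ∈ S → y ∈ S

/-- A family of hyperedges forms an interval hypergraph: some linear order on the
vertices makes every hyperedge an interval (a set of consecutive elements). -/
def IsIntervalHypergraph {α ι : Type*} (H : ι → Set α) : Prop :=
  ∃ r : α → α → Prop, IsLinearOrder α r ∧ ∀ i, IsIntervalWrt r (H i)

/-- `S ⊆ ZMod n` is an arc: a set of (at most `n`) circularly consecutive points. -/
def IsArc (n : ℕ) (S : Set (ZMod n)) : Prop :=
  ∃ a : ZMod n, ∃ k : ℕ, k ≤ n ∧ S = {x | ∃ i : ℕ, i < k ∧ x = a + (i : ZMod n)}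

/-- Arcs `A` and `B` share their start point: some point is a start point of both. -/
def SharesStart (n : ℕ) (A B : Set (ZMod n)) : Prop :=
  ∃ a, a ∈ A ∧ a - 1 ∉ A ∧ a ∈ B ∧ a - 1 ∉ B

/-- Arcs `A` and `B` share their end point: some point is an end point of both. -/
def SharesEnd (n : ℕ) (A B : Set (ZMod n)) : Prop :=
  ∃ a, a ∈ A ∧ a + 1 ∉ A ∧ a ∈ B ∧ a + 1 ∉ B

/-- `G` is a proper interval graph: it has an intersection model consisting of
nonempty integer intervals that are pairwise incomparable under inclusion. -/
def IsProperIntervalGraph {V : Type*} (G : SimpleGraph V) : Prop :=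
  ∃ l : V → Set ℤ,
    (∀ v, ∃ a b : ℤ, a ≤ b ∧ l v = Set.Icc a b) ∧
    (∀ u v, u ≠ v → ¬ l u ⊆ l v) ∧
    (∀ u v, u ≠ v → (G.Adj u v ↔ (l u ∩ l v).Nonempty))

/-- `G` is a circular-arc graph: it has an intersection model consisting of
nonempty arcs of some circle `ZMod n`. -/
def IsCAGraph {V : Type*} (G : SimpleGraph V) : Prop :=
  ∃ n : ℕ, 0 < n ∧ ∃ l : V → Set (ZMod n),
    Function.Injective l ∧
    (∀ v, (l v).Nonempty ∧ IsArc n (l v)) ∧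
    (∀ u v, u ≠ v → (G.Adj u v ↔ (l u ∩ l v).Nonempty))

/-- `G` is a proper circular-arc graph: it has an intersection model consisting of
nonempty arcs of some circle `ZMod n`, pairwise incomparable under inclusion. -/
def IsPCAGraph {V : Type*} (G : SimpleGraph V) : Prop :=
  ∃ n : ℕ, 0 < n ∧ ∃ l : V → Set (ZMod n),
    Function.Injective l ∧
    (∀ v, (l v).Nonempty ∧ IsArc n (l v)) ∧
    (∀ u v, u ≠ v → ¬ l u ⊆ l v) ∧
    (∀ u v, u ≠ v → (G.Adj u v ↔ (l u ∩ l v).Nonempty))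

/-- `G` is bipartite: the vertex set splits into two independent sets. -/
def IsBipartite {V : Type*} (G : SimpleGraph V) : Prop :=
  ∃ U : Set V, (∀ u ∈ U, ∀ v ∈ U, ¬ G.Adj u v) ∧ (∀ u ∉ U, ∀ v ∉ U, ¬ G.Adj u v)

/-!
Let `M` be the complement of `G` and `τ = φ⁻¹ ∘ ψ`. The complement of `H`, pulled back along `ψ`, is
the relation `M.Adj (τ u) v`, so the task is to show that whenever this relation is again a graph,
it is isomorphic to `M`.

Folding vertices onto others with larger neighbourhoods retracts the non-isolated part of `M`, in a
`τ`-equivariant way, onto a `τ`-invariant set `K` in which distinct neighbourhoods are incomparable.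
Unrolling the circular-arc model to the integers shows that the twin classes of `K` form a circulant
graph: the `i`-th class is adjacent exactly to those from `i + c` to `i + m - c`.

If `2 * c = m`, this circulant is a perfect matching. Then the graph joining `τ`-orbits is
bipartite, and applying `τ` to one colour class is the required isomorphism.

If `2 * c < m`, then `τ` moves a class by less than `c`, as `τ u` is never adjacent to `u`, and
comparing extremal displacements shows that `τ` fixes every class. In the arc model, two crossing
pairs of adjacent vertices can be uncrossed; together with counting along the orbits of `τ` this
shows that `τ` preserves the neighbourhood of every vertex, so the twisted graph is `M` itself.
-/

namespace CircularArc

section Twist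

variable {V : Type*} {M : SimpleGraph V} {τ : Equiv.Perm V}

/-- The permutation `τ` twists the graph `M` if `M.Adj (τ u) v`, as a relation in `u` and `v`, is
again symmetric and irreflexive. -/
structure IsTwist (M : SimpleGraph V) (τ : Equiv.Perm V) : Prop where
  adj_apply_comm : ∀ u v, M.Adj (τ u) v ↔ M.Adj u (τ v)
  not_adj_apply : ∀ u, ¬ M.Adj (τ u) u

theorem apply_zpow_of_forall_apply {α : Type*} {f : V → α} (h : ∀ x, f (τ x) = f x) (j : ℤ)
    (x : V) : f ((τ ^ j) x) = f x := by
  induction j using Int.induction_on generalizing x with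
  | zero => rfl
  | succ i ih => rw [zpow_add_one, Equiv.Perm.mul_apply, ih, h]
  | pred i ih =>
    rw [zpow_sub_one, Equiv.Perm.mul_apply, ih, ← h, Equiv.Perm.inv_def, Equiv.apply_symm_apply]

namespace IsTwist

theorem adj_zpow_comm (T : IsTwist M τ) (j : ℤ) (u v : V) :
    M.Adj ((τ ^ j) u) v ↔ M.Adj u ((τ ^ j) v) := by
  induction j using Int.induction_on generalizing u v with
  | zero => rfl
  | succ i ih =>
    rw [zpow_add_one, Equiv.Perm.mul_apply, ih, T.adj_apply_comm, (Commute.zpow_self τ _).eq,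
      Equiv.Perm.mul_apply]
  | pred i ih =>
    have adj_inv_comm (u v : V) : M.Adj (τ⁻¹ u) v ↔ M.Adj u (τ⁻¹ v) := by
      simpa using (T.adj_apply_comm (τ⁻¹ u) (τ⁻¹ v)).symm
    rw [zpow_sub_one, Equiv.Perm.mul_apply, ih, adj_inv_comm, (Commute.zpow_self τ _).inv_right.eq,
      Equiv.Perm.mul_apply]

theorem not_adj_zpow (T : IsTwist M τ) (j : ℤ) (u : V) : ¬ M.Adj ((τ ^ j) u) u := by
  obtain ⟨k, rfl | rfl⟩ := j.even_or_odd'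
  · rw [two_mul, zpow_add, Equiv.Perm.mul_apply, T.adj_zpow_comm]
    exact M.irrefl
  · rw [two_mul, add_assoc, zpow_add, Equiv.Perm.mul_apply, T.adj_zpow_comm, add_comm, zpow_one_add,
      Equiv.Perm.mul_apply]
    exact T.not_adj_apply _

/-- The graph joining `u` and `v` when `M` has an edge between the `τ`-orbits of `u` and `v`: by
`IsTwist.adj_zpow_comm` it is enough to move `u`. -/
def orbitGraph (T : IsTwist M τ) : SimpleGraph V where
  Adj u v := ∃ j : ℤ, M.Adj ((τ ^ j) u) v
  symm := ⟨fun _ _ ⟨j, h⟩ => ⟨j, ((T.adj_zpow_comm j _ _).1 h).symm⟩⟩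
  loopless := ⟨fun u ⟨j, h⟩ => T.not_adj_zpow j u h⟩

theorem orbitGraph_adj_apply_left (T : IsTwist M τ) {u v : V} :
    T.orbitGraph.Adj (τ u) v ↔ T.orbitGraph.Adj u v := by
  refine (Equiv.addRight (1 : ℤ)).exists_congr fun j => ?_
  rw [Equiv.coe_addRight, zpow_add_one, Equiv.Perm.mul_apply]

theorem orbitGraph_adj_apply_right (T : IsTwist M τ) {u v : V} :
    T.orbitGraph.Adj u (τ v) ↔ T.orbitGraph.Adj u v := by
  rw [T.orbitGraph.adj_comm, T.orbitGraph_adj_apply_left, T.orbitGraph.adj_comm]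

theorem orbitGraph_adj_of_adj (T : IsTwist M τ) {u v : V} (h : M.Adj u v) :
    T.orbitGraph.Adj u v := ⟨0, h⟩

/-- The isomorphism applies `τ` to the non-isolated vertices of one colour class. -/
theorem exists_perm_of_colorable (T : IsTwist M τ) (hT : T.orbitGraph.Colorable 2) :
    ∃ f : Equiv.Perm V, ∀ u v, M.Adj (τ u) v ↔ M.Adj (f u) (f v) := by
  classical
  let C : T.orbitGraph.Coloring Bool := hT.toColoring le_rfl
  let S : V → Prop := fun u => C u = false ∧ ∃ w, T.orbitGraph.Adj u w
  have hS : ∀ u, S (τ u) ↔ S u := by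
    intro u
    simp only [S, T.orbitGraph_adj_apply_left]
    refine and_congr_left fun ⟨w, hw⟩ => ?_
    have := C.valid hw
    have := C.valid (T.orbitGraph_adj_apply_left.2 hw)
    grind
  let f : Equiv.Perm V := Equiv.Perm.ofSubtype (τ.subtypePerm hS)
  have f_of : ∀ {u}, S u → f u = τ u := Equiv.Perm.ofSubtype_subtypePerm_of_mem hS
  have f_of_not : ∀ {u}, ¬ S u → f u = u := Equiv.Perm.ofSubtype_subtypePerm_of_not_mem hS
  refine ⟨f, fun u v => ?_⟩
  by_cases huv : T.orbitGraph.Adj u v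
  · have hC := C.valid huv
    cases hu : C u
    · rw [f_of ⟨hu, v, huv⟩, f_of_not (u := v) (by grind)]
    · rw [f_of_not (u := u) (by grind), f_of (u := v) ⟨by grind, u, huv.symm⟩, T.adj_apply_comm]
  · refine iff_of_false (fun h => huv ?_) (fun h => huv ?_)
    · exact T.orbitGraph_adj_apply_left.1 (T.orbitGraph_adj_of_adj h)
    · have := T.orbitGraph_adj_of_adj h
      by_cases hu : S u <;> by_cases hv : S v <;>
        simpa only [f_of, f_of_not, hu, hv, not_false_eq_true, orbitGraph_adj_apply_left,
          orbitGraph_adj_apply_right] using this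

end IsTwist

/-- The set of neighbours of `v` in `M` that lie in `K`. -/
def trace (M : SimpleGraph V) (K : Set V) (v : V) : Set V :=
  K ∩ M.neighborSet v

variable {K : Set V}

theorem mem_trace {u v : V} : u ∈ trace M K v ↔ u ∈ K ∧ M.Adj v u := Iff.rfl

theorem trace_congr {u v : V} (h : trace M K u = trace M K v) {w : V} (hw : w ∈ K) :
    M.Adj u w ↔ M.Adj v w := by
  have := Set.ext_iff.1 h w
  simpa only [mem_trace, hw, true_and] using this

namespace IsTwist

theorem trace_apply (T : IsTwist M τ) (hK : ∀ v, τ v ∈ K ↔ v ∈ K) (v : V) :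
    trace M K (τ v) = τ ⁻¹' trace M K v := by
  ext w
  rw [mem_trace, Set.mem_preimage, mem_trace, hK, T.adj_apply_comm]

theorem ncard_trace_apply (T : IsTwist M τ) (hK : ∀ v, τ v ∈ K ↔ v ∈ K) (v : V) :
    (trace M K (τ v)).ncard = (trace M K v).ncard := by
  rw [T.trace_apply hK, Set.ncard_preimage_of_injective_subset_range τ.injective]
  exact τ.surjective.range_eq ▸ Set.subset_univ _

end IsTwist

/-- Distinct `K`-traces of vertices of `K` are incomparable. -/
def IsStiff (M : SimpleGraph V) (K : Set V) : Prop :=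
  ∀ ⦃u⦄, u ∈ K → ∀ ⦃v⦄, v ∈ K → trace M K u ⊆ trace M K v → trace M K u = trace M K v

/-- `K` is `τ`-invariant and `r` maps the non-isolated vertices into `K`, without shrinking
`K`-traces and compatibly with all the relations `M.Adj ((τ ^ j) u) v`. -/
structure IsCore (M : SimpleGraph V) (τ : Equiv.Perm V) (K : Set V) (r : V → V) : Prop where
  apply_mem_iff : ∀ v, τ v ∈ K ↔ v ∈ K
  trace_nonempty : ∀ v ∈ K, (trace M K v).Nonempty
  map_mem : ∀ ⦃v w⦄, M.Adj v w → r v ∈ K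
  map_adj : ∀ (j : ℤ) ⦃u v⦄, M.Adj ((τ ^ j) u) v → M.Adj ((τ ^ j) (r u)) (r v)
  trace_subset : ∀ v, trace M K v ⊆ trace M K (r v)

theorem IsCore.zpow_mem_iff {r : V → V} (hK : IsCore M τ K r) {j : ℤ} {v : V} :
    (τ ^ j) v ∈ K ↔ v ∈ K :=
  iff_of_eq (apply_zpow_of_forall_apply (f := (· ∈ K)) (fun x => propext (hK.apply_mem_iff x)) j v)

theorem IsTwist.isCore_support (T : IsTwist M τ) : IsCore M τ M.support id where
  apply_mem_iff v := by
    simp only [SimpleGraph.mem_support]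
    exact τ.exists_congr fun w => T.adj_apply_comm v w
  trace_nonempty v := fun ⟨w, hw⟩ => ⟨w, ⟨v, hw.symm⟩, hw⟩
  map_mem v w h := ⟨w, h⟩
  map_adj _ _ _ h := h
  trace_subset _ := subset_rfl

theorem exists_trace_subset_maximal [Finite V] (M : SimpleGraph V) (K : Set V) {u : V}
    (hu : u ∈ K) : ∃ w ∈ K, trace M K u ⊆ trace M K w ∧
      ∀ v ∈ K, trace M K w ⊆ trace M K v → trace M K w = trace M K v := by
  obtain ⟨_, hle, ⟨w, hw, rfl⟩, hmax⟩ :=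
    Finite.exists_le_maximal (p := (· ∈ trace M K '' K)) (mem_image_of_mem _ hu)
  exact ⟨w, hw, hle, fun v hv h => h.antisymm (hmax ⟨v, hv, rfl⟩ h)⟩

/-- Each vertex of `K` is folded onto one whose trace is maximal. -/
theorem IsCore.exists_fold [Finite V] (T : IsTwist M τ) {r : V → V} (hK : IsCore M τ K r) :
    ∃ r', IsCore M τ
      {u ∈ K | ∀ v ∈ K, trace M K u ⊆ trace M K v → trace M K u = trace M K v} r' := by
  choose! q q_mem subset_q q_max using fun u (hu : u ∈ K) => exists_trace_subset_maximal M K hu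
  have map_adj {j : ℤ} {u v : V} (hu : u ∈ K) (hv : v ∈ K) (h : M.Adj ((τ ^ j) u) v) :
      M.Adj ((τ ^ j) (q u)) (q v) := by
    have hqu : M.Adj (q u) ((τ ^ j) v) :=
      (subset_q u hu ⟨hK.zpow_mem_iff.2 hv, (T.adj_zpow_comm j u v).1 h⟩).2
    rw [← T.adj_zpow_comm] at hqu
    exact (subset_q v hv ⟨hK.zpow_mem_iff.2 (q_mem u hu), hqu.symm⟩).2.symm
  refine ⟨q ∘ r, ?_, ?_, ?_, ?_, ?_⟩
  · intro v
    refine and_congr (hK.apply_mem_iff v) (τ.symm.forall_congr fun w => ?_)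
    have hw : τ (τ.symm w) = w := τ.apply_symm_apply w
    rw [← hw, hK.apply_mem_iff, T.trace_apply hK.apply_mem_iff, T.trace_apply hK.apply_mem_iff,
      τ.surjective.preimage_subset_preimage_iff, τ.surjective.preimage_injective.eq_iff, hw]
  · rintro v ⟨hv, -⟩
    obtain ⟨w, hw, hvw⟩ := hK.trace_nonempty v hv
    exact ⟨q w, ⟨q_mem w hw, q_max w hw⟩, (subset_q w hw ⟨hv, hvw.symm⟩).2.symm⟩
  · intro v w h
    exact ⟨q_mem _ (hK.map_mem h), q_max _ (hK.map_mem h)⟩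
  · intro j u v h
    exact map_adj (hK.map_mem ((T.adj_zpow_comm j u v).1 h)) (hK.map_mem h.symm) (hK.map_adj j h)
  · rintro v x ⟨hx, hvx⟩
    exact ⟨hx, (subset_q _ (hK.map_mem hvx) (hK.trace_subset v ⟨hx.1, hvx⟩)).2⟩

theorem IsTwist.exists_core [Finite V] (T : IsTwist M τ) :
    ∃ K r, IsCore M τ K r ∧ IsStiff M K := by
  obtain ⟨K, -, ⟨r, hK⟩, hmin⟩ :=
    Finite.exists_le_minimal (p := fun K => ∃ r, IsCore M τ K r) ⟨id, T.isCore_support⟩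
  have hfold := hmin (hK.exists_fold T) (Set.sep_subset _ _)
  exact ⟨K, r, hK, fun u hu v hv => (hfold hu).2 v hv⟩

theorem colorable_two_of_forall_adj {H : SimpleGraph V}
    (h : ∀ ⦃a b c d⦄, H.Adj a b → H.Adj b c → H.Adj c d → H.Adj a d) : H.Colorable 2 := by
  have adj_of_walk {u v : V} (p : H.Walk u v) :
      (Odd p.length → H.Adj u v) ∧ (Even p.length → ∀ x, H.Adj x u → H.Adj x v) := by
    induction p with
    | nil => simp
    | cons hadj p ih =>
      rw [SimpleGraph.Walk.length_cons, Nat.odd_add_one, Nat.even_add_one, Nat.not_odd_iff_even,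
        Nat.not_even_iff_odd]
      exact ⟨fun hp => ih.2 hp _ hadj, fun hp x hx => h hx hadj (ih.1 hp)⟩
  refine SimpleGraph.two_colorable_iff_forall_loop_even.2 fun u p => ?_
  rw [← Nat.not_odd_iff_even]
  exact fun hp => H.irrefl ((adj_of_walk p).1 hp)

theorem IsCore.orbitGraph_colorable (T : IsTwist M τ) {r : V → V} (hK : IsCore M τ K r)
    (hthin : ∀ u ∈ K, ∀ z ∈ trace M K u, ∀ z' ∈ trace M K u, trace M K z = trace M K z') :
    T.orbitGraph.Colorable 2 := by
  let H : SimpleGraph V := (T.orbitGraph.induce K).spanningCoe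
  have H_adj {u v : V} : H.Adj u v ↔ u ∈ K ∧ v ∈ K ∧ T.orbitGraph.Adj u v := by
    simp [H, and_comm, and_left_comm]
  refine SimpleGraph.Colorable.of_hom (G' := H) ⟨r, ?_⟩ (colorable_two_of_forall_adj ?_)
  · rintro u v ⟨j, h⟩
    exact H_adj.2
      ⟨hK.map_mem ((T.adj_zpow_comm j u v).1 h), hK.map_mem h.symm, j, hK.map_adj j h⟩
  · intro a b c d hab hbc hcd
    obtain ⟨ha, hb, i, hi⟩ := H_adj.1 hab
    obtain ⟨-, hc, j, hj⟩ := H_adj.1 hbc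
    obtain ⟨-, hd, k, hk⟩ := H_adj.1 hcd
    have hac : trace M K ((τ ^ i) a) = trace M K ((τ ^ j) c) :=
      hthin b hb _ ⟨hK.zpow_mem_iff.2 ha, hi.symm⟩ _
        ⟨hK.zpow_mem_iff.2 hc, (T.adj_zpow_comm j b c).1 hj⟩
    have hcd' : M.Adj ((τ ^ j) c) ((τ ^ (k - j)) d) := by
      rwa [← T.adj_zpow_comm, ← Equiv.Perm.mul_apply, ← zpow_add, sub_add_cancel]
    refine H_adj.2 ⟨ha, hd, k - j + i, ?_⟩
    rw [zpow_add, Equiv.Perm.mul_apply, T.adj_zpow_comm]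
    exact (trace_congr hac (hK.zpow_mem_iff.2 hd)).2 hcd'

end Twist

/-- A circular-arc model of the complement of `M`, with no arc properly inside another, unrolled to
the integers: the circle has circumference `n`, and the arc of `v` is the image of `[s v, e v]`.
Thus `M` joins `u` to `v` when some translate of `[s v, e v]` lies strictly between `[s u, e u]`
and `[s u + n, e u + n]`. -/
structure RoundModel {V : Type*} (M : SimpleGraph V) where
  n : ℤ
  s : V → ℤ
  e : V → ℤ
  n_pos : 0 < n
  s_le_e : ∀ v, s v ≤ e v
  e_le_e : ∀ u v k, s u ≤ s v + k * n → e u ≤ e v + k * n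
  adj_iff : ∀ u v, M.Adj u v ↔ ∃ k, e u < s v + k * n ∧ e v + k * n < s u + n

namespace RoundModel

variable {V : Type*} {M : SimpleGraph V} (P : RoundModel M) {K : Set V} {x x' y y' z t w : V × ℤ}

/-- The left endpoint of a lift: `(v, k)` stands for the interval `[s v + k * n, e v + k * n]`. -/
def lo (x : V × ℤ) : ℤ := P.s x.1 + x.2 * P.n

/-- The right endpoint of a lift. -/
def hi (x : V × ℤ) : ℤ := P.e x.1 + x.2 * P.n

/-- The interval of `y` lies strictly between that of `x` and its next translate. -/
def Rel (x y : V × ℤ) : Prop := P.hi x < P.lo y ∧ P.hi y < P.lo x + P.n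

/-- Translation of a lift by `j` turns. -/
def shift (j : ℤ) (x : V × ℤ) : V × ℤ := (x.1, x.2 + j)

theorem lo_shift (j : ℤ) (x : V × ℤ) : P.lo (shift j x) = P.lo x + j * P.n := by
  simp only [lo, shift]; ring

theorem hi_shift (j : ℤ) (x : V × ℤ) : P.hi (shift j x) = P.hi x + j * P.n := by
  simp only [hi, shift]; ring

theorem lo_le_hi (x : V × ℤ) : P.lo x ≤ P.hi x :=
  add_le_add_left (P.s_le_e x.1) _

theorem hi_mono (h : P.lo x ≤ P.lo y) : P.hi x ≤ P.hi y := by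
  have := P.e_le_e x.1 y.1 (y.2 - x.2) (by simp only [lo] at h; linarith)
  simp only [hi]
  linarith

theorem rel_shift_shift (j : ℤ) : P.Rel (shift j x) (shift j y) ↔ P.Rel x y := by
  simp only [Rel, lo_shift, hi_shift]
  constructor <;> rintro ⟨h, h'⟩ <;> constructor <;> linarith

theorem rel_shift_one : P.Rel y (shift 1 x) ↔ P.Rel x y := by
  simp only [Rel, lo_shift, hi_shift, one_mul, add_lt_add_iff_right, and_comm]

theorem eq_of_fst_eq (h : x.1 = y.1) (hxy : P.lo x < P.lo y + P.n) (hyx : P.lo y < P.lo x + P.n) :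
    x = y := by
  have hn := P.n_pos
  simp only [lo, h] at hxy hyx
  have h1 : x.2 < y.2 + 1 := lt_of_mul_lt_mul_right (by linarith) hn.le
  have h2 : y.2 < x.2 + 1 := lt_of_mul_lt_mul_right (by linarith) hn.le
  exact Prod.ext h (by lia)

variable {P}

theorem Rel.lo_lt (h : P.Rel x y) : P.lo x < P.lo y := (P.lo_le_hi x).trans_lt h.1

theorem Rel.adj (h : P.Rel x y) : M.Adj x.1 y.1 := by
  refine (P.adj_iff _ _).2 ⟨y.2 - x.2, ?_⟩
  simp only [Rel, lo, hi] at h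
  constructor <;> linarith

theorem exists_rel_right {v : V} (h : M.Adj x.1 v) : ∃ y, y.1 = v ∧ P.Rel x y := by
  obtain ⟨k, h1, h2⟩ := (P.adj_iff _ _).1 h
  refine ⟨(v, x.2 + k), rfl, ?_, ?_⟩ <;> simp only [lo, hi] <;> linarith

theorem exists_rel_left {v : V} (h : M.Adj v y.1) : ∃ x, x.1 = v ∧ P.Rel x y := by
  obtain ⟨x, rfl, hx⟩ := exists_rel_right (P := P) h.symm
  exact ⟨shift (-1) x, rfl, P.rel_shift_one.1 (by simpa [shift] using hx)⟩

theorem uncross (hx : P.lo x ≤ P.lo x') (hy : P.lo y ≤ P.lo y') (h : P.Rel x y')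
    (h' : P.Rel x' y) : P.Rel x y ∧ P.Rel x' y' := by
  have := P.hi_mono hx
  have := P.hi_mono hy
  exact ⟨⟨by linarith [h'.1], by linarith [h.2]⟩, ⟨by linarith [h'.1], by linarith [h.2]⟩⟩

theorem Rel.right_convex (h : P.Rel x y) (h' : P.Rel x y') (hy : P.lo y ≤ P.lo z)
    (hy' : P.lo z ≤ P.lo y') : P.Rel x z :=
  ⟨h.1.trans_le hy, (P.hi_mono hy').trans_lt h'.2⟩

theorem Rel.left_convex (h : P.Rel x y) (h' : P.Rel x' y) (hx : P.lo x ≤ P.lo z)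
    (hx' : P.lo z ≤ P.lo x') : P.Rel z y :=
  ⟨(P.hi_mono hx').trans_lt h'.1, by linarith [h.2]⟩

theorem Rel.rel_or_rel_of_between (h : P.Rel z w) (hx : P.Rel x t) (hx' : P.Rel x' t)
    (hxz : P.lo x ≤ P.lo z) (hzx' : P.lo z ≤ P.lo x') : P.Rel x w ∨ P.Rel x' w := by
  rcases le_total (P.lo t) (P.lo w) with htw | hwt
  · exact .inr (uncross hzx' htw h hx').2
  · exact .inl (uncross hxz hwt hx h).1

theorem Rel.lo_le_hi_of_not_adj (hx : P.Rel x t) (hx' : P.Rel x' t) (h : ¬ M.Adj x.1 x'.1) :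
    P.lo x' ≤ P.hi x := by
  by_contra! hlt
  have hrel : P.Rel x x' := ⟨hlt, by linarith [hx'.1, P.lo_le_hi t, hx.2]⟩
  exact h hrel.adj

/-- The intervals of `x` and `x'` meet, so a vertex has at most one lift within reach of both. -/
theorem Rel.eq_of_fst_eq (hx : P.Rel x t) (hx' : P.Rel x' t) (h : ¬ M.Adj x.1 x'.1)
    (hy : P.Rel x y) (hy' : P.Rel x' y') (hyy : y.1 = y'.1) : y = y' := by
  have h1 := hx.lo_le_hi_of_not_adj hx' h
  have h2 := hx'.lo_le_hi_of_not_adj hx (mt .symm h)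
  exact P.eq_of_fst_eq hyy (by linarith [P.lo_le_hi y, hy.2, hy'.1])
    (by linarith [P.lo_le_hi y', hy'.2, hy.1])

theorem Rel.of_trace_subset (hx : P.Rel x t) (hx' : P.Rel x' t) (h : ¬ M.Adj x.1 x'.1)
    (hK : trace M K x.1 ⊆ trace M K x'.1) (hz : z.1 ∈ K) (hxz : P.Rel x z) : P.Rel x' z := by
  obtain ⟨z', hzz', hz'⟩ := exists_rel_right (P := P) (hK ⟨hz, hxz.adj⟩).2
  rwa [hx.eq_of_fst_eq hx' h hxz hz' hzz'.symm]

variable (P) in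
/-- The lifts `x` and `x'` are related to the same lifts of vertices of `K`. -/
def SameTrace (K : Set V) (x x' : V × ℤ) : Prop :=
  ∀ z : V × ℤ, z.1 ∈ K → (P.Rel x z ↔ P.Rel x' z)

theorem Rel.sameTrace (hx : P.Rel x t) (hx' : P.Rel x' t) (h : ¬ M.Adj x.1 x'.1)
    (hK : trace M K x.1 = trace M K x'.1) : P.SameTrace K x x' := fun _ hz =>
  ⟨hx.of_trace_subset hx' h hK.subset hz,
    hx'.of_trace_subset hx (mt .symm h) hK.symm.subset hz⟩

namespace SameTrace

theorem symm (h : P.SameTrace K x x') : P.SameTrace K x' x := fun z hz => (h z hz).symm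

theorem rel_left_iff (h : P.SameTrace K x x') (hz : z.1 ∈ K) : P.Rel z x ↔ P.Rel z x' := by
  rw [← P.rel_shift_one, ← P.rel_shift_one (x := z) (y := x')]
  exact h (shift 1 z) hz

theorem trace_subset (h : P.SameTrace K x x') : trace M K x.1 ⊆ trace M K x'.1 := by
  rintro u ⟨hu, hxu⟩
  obtain ⟨z, rfl, hz⟩ := exists_rel_right (P := P) hxu
  exact ⟨hu, ((h z hu).1 hz).adj⟩

theorem trace_eq (h : P.SameTrace K x x') : trace M K x.1 = trace M K x'.1 :=
  h.trace_subset.antisymm h.symm.trace_subset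

theorem of_between (h : P.SameTrace K x x') (ht : t.1 ∈ K) (hxt : P.Rel x t)
    (hxz : P.lo x ≤ P.lo z) (hzx' : P.lo z ≤ P.lo x') : P.SameTrace K x z := by
  refine fun w hw => ⟨fun hxw => hxw.left_convex ((h w hw).1 hxw) hxz hzx', fun hzw => ?_⟩
  rcases hzw.rel_or_rel_of_between hxt ((h t ht).1 hxt) hxz hzx' with hxw | hxw
  · exact hxw
  · exact (h w hw).2 hxw

end SameTrace

theorem lo_mem_Icc_of_swap (hyy : P.lo y' ≤ P.lo y) (hx : P.Rel x y') (hx' : P.Rel x' y)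
    (hxy : ¬ P.Rel x y) (hxy' : ¬ P.Rel x' y') (hz : P.Rel z y) (hz' : P.Rel z y') :
    P.lo z ∈ Icc (P.lo x) (P.lo x') := by
  refine ⟨?_, ?_⟩ <;> by_contra! hlt
  · exact hxy (uncross hlt.le hyy hz hx).2
  · exact hxy' (uncross hlt.le hyy hx' hz').1

end RoundModel

section Swap

open RoundModel

variable {V : Type*} {M : SimpleGraph V} {P : RoundModel M} {K : Set V}

/-- Every vertex of `K` has neighbours in `K` with different `K`-traces. -/
def IsThick (M : SimpleGraph V) (K : Set V) : Prop :=
  ∀ u ∈ K, ∃ z ∈ trace M K u, ∃ z' ∈ trace M K u, trace M K z ≠ trace M K z'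

theorem trace_subset_of_swap {k x x' y y' : V × ℤ}
    (hxk : ∀ z : V × ℤ, z.1 ∈ K → P.Rel x z → P.Rel k z)
    (hxk' : ∀ z : V × ℤ, z.1 ∈ K → P.Rel x' z → P.Rel k z) (hy : y.1 ∈ K) (hy' : y'.1 ∈ K)
    (hyy : P.SameTrace K y y') (hle : P.lo y' ≤ P.lo y) (hx : P.Rel x y') (hx' : P.Rel x' y)
    (hxy : ¬ P.Rel x y) (hxy' : ¬ P.Rel x' y') {v : V} (hv : v ∈ trace M K y.1) :
    trace M K v ⊆ trace M K k.1 := by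
  obtain ⟨z, rfl, hz⟩ := exists_rel_left (P := P) hv.2.symm
  obtain ⟨hxz, hzx'⟩ :=
    lo_mem_Icc_of_swap hle hx hx' hxy hxy' hz ((hyy.rel_left_iff hv.1).1 hz)
  rintro _ ⟨hu, hadj⟩
  obtain ⟨u, rfl, hzu⟩ := exists_rel_right (P := P) hadj
  refine ⟨hu, Rel.adj (P := P) (x := k) ?_⟩
  rcases le_total (P.lo y) (P.lo u) with hyu | huy
  · exact hxk' u hu (uncross hzx' hyu hzu hx').2
  rcases le_total (P.lo u) (P.lo y') with huy' | huy'
  · exact hxk u hu (uncross hxz huy' hx hzu).1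
  · exact (hxk y' hy' hx).right_convex (hxk' y hy hx') huy' huy

theorem not_adj_of_trace_subset {u v : V} (hv : v ∈ K) (h : trace M K u ⊆ trace M K v) :
    ¬ M.Adj u v := fun huv => M.irrefl (h ⟨hv, huv⟩).2

theorem adj_of_swap_core (P : RoundModel M) (hstiff : IsStiff M K) (hthick : IsThick M K)
    {k v v' w w' : V} (hk : k ∈ K) (hv : trace M K v ⊆ trace M K k)
    (hv' : trace M K v' ⊆ trace M K k) (hw : w ∈ K) (hw' : w' ∈ K)
    (hww : trace M K w = trace M K w') (hvw' : M.Adj v w') (hvw : M.Adj v' w)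
    (hnvw' : ¬ M.Adj v' w') : M.Adj v w := by
  by_contra hnvw
  obtain ⟨y, rfl, hy⟩ := exists_rel_right (P := P) (x := (k, 0)) (hv' ⟨hw, hvw⟩).2
  obtain ⟨y', rfl, hy'⟩ := exists_rel_right (P := P) (x := (k, 0)) (hv ⟨hw', hvw'⟩).2
  obtain ⟨x, rfl, hx⟩ := exists_rel_left (P := P) hvw'
  obtain ⟨x', rfl, hx'⟩ := exists_rel_left (P := P) hvw
  have hxk (z : V × ℤ) (hz : z.1 ∈ K) : P.Rel x z → P.Rel (k, 0) z :=
    hx.of_trace_subset hy' (not_adj_of_trace_subset hk hv) hv hz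
  have hxk' (z : V × ℤ) (hz : z.1 ∈ K) : P.Rel x' z → P.Rel (k, 0) z :=
    hx'.of_trace_subset hy (not_adj_of_trace_subset hk hv') hv' hz
  have hyy : P.SameTrace K y y' :=
    (P.rel_shift_one.2 hy).sameTrace (P.rel_shift_one.2 hy')
      (not_adj_of_trace_subset hw' hww.subset) hww
  have trace_eq (z : V) (hz : z ∈ trace M K y.1) : trace M K z = trace M K k := by
    refine hstiff hz.1 hk ?_
    rcases le_total (P.lo y') (P.lo y) with hle | hle
    · exact trace_subset_of_swap hxk hxk' hw hw' hyy hle hx hx' (mt Rel.adj hnvw)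
        (mt Rel.adj hnvw') hz
    · exact trace_subset_of_swap hxk' hxk hw' hw hyy.symm hle hx' hx (mt Rel.adj hnvw')
        (mt Rel.adj hnvw) (hww ▸ hz)
  obtain ⟨z, hz, z', hz', hne⟩ := hthick y.1 hw
  exact hne ((trace_eq z hz).trans (trace_eq z' hz').symm)

theorem sameTrace_of_swap {x x' y y' : V × ℤ} (hxx : P.SameTrace K x x')
    (hnx : ¬ M.Adj x.1 x'.1) {t : V × ℤ} (ht : t.1 ∈ K) (hxt : P.Rel x t)
    (hyy : trace M K y.1 = trace M K y'.1) (hyne : (trace M K y.1).Nonempty)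
    (hny : ¬ M.Adj y.1 y'.1) (hley : P.lo y' ≤ P.lo y)
    (hx : P.Rel x y') (hx' : P.Rel x' y) : P.SameTrace K y y' := by
  obtain ⟨_, hg, hadj⟩ := hyne
  obtain ⟨g, rfl, hyg⟩ := exists_rel_right (P := P) hadj
  obtain ⟨y'', hy'', hyg''⟩ := exists_rel_left (P := P) ((trace_congr hyy hg).1 hadj)
  have hmeet : P.lo x' ≤ P.hi x := hxt.lo_le_hi_of_not_adj ((hxx t ht).1 hxt) hnx
  have hmeet' : P.lo y'' ≤ P.hi y := hyg.lo_le_hi_of_not_adj hyg'' (by rwa [hy''])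
  have hmeet'' : P.lo y ≤ P.hi y'' :=
    hyg''.lo_le_hi_of_not_adj hyg (by rw [hy'']; exact mt .symm hny)
  have hlt : P.lo y'' < P.lo y' + P.n := by linarith [hx'.2, hx.1]
  have hlt' : P.lo y' < P.lo y'' + P.n := by
    by_contra! hle
    have := P.hi_mono (x := shift 1 y'') (y := y') (by rwa [lo_shift, one_mul])
    rw [hi_shift, one_mul] at this
    linarith [hx.2, hx.lo_lt]
  obtain rfl := P.eq_of_fst_eq hy'' hlt hlt'
  exact hyg.sameTrace hyg'' hny hyy

theorem not_isThick_of_swap {x x' y y' : V × ℤ} (hxx : P.SameTrace K x x')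
    (hyy : P.SameTrace K y y') {t : V × ℤ} (ht : t.1 ∈ K) (hxt : P.Rel x t)
    (hyne : (trace M K y.1).Nonempty) (hlex : P.lo x ≤ P.lo x') (hley : P.lo y' ≤ P.lo y)
    (hx : P.Rel x y') (hx' : P.Rel x' y) (hxy : ¬ P.Rel x y) (hxy' : ¬ P.Rel x' y') :
    ¬ IsThick M K := by
  intro hthick
  obtain ⟨_, hg, hadj⟩ := hyne
  obtain ⟨g, rfl, hyg⟩ := exists_rel_right (P := P) hadj
  have hyt : P.SameTrace K y' t := by
    obtain ⟨hyt, hty⟩ := lo_mem_Icc_of_swap (x := y') (x' := y) (y := shift 1 x') (y' := shift 1 x)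
      (by rw [lo_shift, lo_shift]; linarith) (P.rel_shift_one.2 hx) (P.rel_shift_one.2 hx')
      (mt P.rel_shift_one.1 hxy') (mt P.rel_shift_one.1 hxy)
      (P.rel_shift_one.2 ((hxx t ht).1 hxt)) (P.rel_shift_one.2 hxt)
    exact hyy.symm.of_between hg ((hyy g hg).1 hyg) hyt hty
  have trace_eq (z : V) (hz : z ∈ trace M K t.1) : trace M K z = trace M K x.1 := by
    obtain ⟨z, rfl, hzt⟩ := exists_rel_left (P := P) hz.2.symm
    have hzy' : P.Rel z y' := (hyt.rel_left_iff hz.1).2 hzt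
    have hzy : P.Rel z y := (hyy.rel_left_iff hz.1).2 hzy'
    obtain ⟨hxz, hzx⟩ := lo_mem_Icc_of_swap hley hx hx' hxy hxy' hzy hzy'
    exact (hxx.of_between ht hxt hxz hzx).trace_eq.symm
  obtain ⟨z, hz, z', hz', hne⟩ := hthick t.1 ht
  exact hne ((trace_eq z hz).trans (trace_eq z' hz').symm)

theorem adj_of_swap (P : RoundModel M) (hthick : IsThick M K) {v v' w w' : V}
    (hvv : trace M K v = trace M K v') (hvne : (trace M K v).Nonempty) (hnv : ¬ M.Adj v v')
    (hww : trace M K w = trace M K w') (hwne : (trace M K w).Nonempty) (hnw : ¬ M.Adj w w')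
    (hvw' : M.Adj v w') (hvw : M.Adj v' w) (hnvw' : ¬ M.Adj v' w') : M.Adj v w := by
  obtain ⟨_, ht, hvt⟩ := hvne
  obtain ⟨t, rfl, hxt⟩ := exists_rel_right (P := P) (x := (v, 0)) hvt
  obtain ⟨x', rfl, hxt'⟩ := exists_rel_left (P := P) ((trace_congr hvv ht).1 hvt)
  have hxx : P.SameTrace K (v, 0) x' := hxt.sameTrace hxt' hnv hvv
  obtain ⟨y', rfl, hy'⟩ := exists_rel_right (P := P) (x := (v, 0)) hvw'
  obtain ⟨y, rfl, hy⟩ := exists_rel_right (P := P) hvw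
  by_contra hnvw
  have hxy : ¬ P.Rel (v, 0) y := mt Rel.adj hnvw
  have hxy' : ¬ P.Rel x' y' := mt Rel.adj hnvw'
  rcases le_total (P.lo (v, 0)) (P.lo x') with hle | hle
  · have hley : P.lo y' ≤ P.lo y := le_of_not_ge fun h => hxy (uncross hle h hy' hy).1
    exact not_isThick_of_swap hxx
      (sameTrace_of_swap hxx hnv ht hxt hww hwne hnw hley hy' hy)
      ht hxt hwne hle hley hy' hy hxy hxy' hthick
  · have hley : P.lo y ≤ P.lo y' := le_of_not_ge fun h => hxy' (uncross hle h hy hy').1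
    exact not_isThick_of_swap hxx.symm
      (sameTrace_of_swap hxx.symm (mt .symm hnv) ht hxt' hww.symm (hww ▸ hwne) (mt .symm hnw)
        hley hy hy')
      ht hxt' (hww ▸ hwne) hle hley hy hy' hxy' hxy hthick

end Swap

section Int

theorem monotone_sub_self_of_strictMono {f : ℤ → ℤ} (hf : StrictMono f) :
    Monotone fun i => f i - i :=
  monotone_int_of_le_succ fun i => by have := hf (lt_add_one i); lia

theorem eq_add_of_strictMono_of_add_period {f : ℤ → ℤ} (hf : StrictMono f) {m : ℤ} (hm : 0 < m)
    (h : ∀ i, f (i + m) = f i + m) (i : ℤ) : f i = i + f 0 := by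
  have f_add_one (i : ℤ) : f (i + 1) = f i + 1 := by
    have := monotone_sub_self_of_strictMono hf (show i ≤ i + 1 by lia)
    have := monotone_sub_self_of_strictMono hf (show i + 1 ≤ i + m by lia)
    grind
  induction i using Int.induction_on with
  | zero => simp
  | succ i ih => grind
  | pred i ih => grind

theorem exists_le_lt_add_one_of_strictMono {f : ℤ → ℤ} (hf : StrictMono f) (q : ℤ) :
    ∃ i, f i ≤ q ∧ q < f (i + 1) := by
  have le_add {i : ℤ} (hi : i ≤ 0) : f i ≤ i + f 0 := by
    have := monotone_sub_self_of_strictMono hf hi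
    grind
  have add_le {i : ℤ} (hi : 0 ≤ i) : i + f 0 ≤ f i := by
    have := monotone_sub_self_of_strictMono hf hi
    grind
  obtain ⟨i, hi, hmax⟩ := Int.exists_greatest_of_bdd (P := fun i => f i ≤ q)
    ⟨max (q - f 0) 0, fun i hi => by have := @add_le i; lia⟩
    ⟨min (q - f 0) 0, by have := @le_add (min (q - f 0) 0) (min_le_right _ _); lia⟩
  exact ⟨i, hi, lt_of_not_ge fun h => by have := hmax _ h; lia⟩

theorem exists_orderIso_of_add_mem_iff {X : Set ℤ} (hX : X.Nonempty) {n : ℤ} (hn : 0 < n)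
    (h : ∀ p, p + n ∈ X ↔ p ∈ X) :
    ∃ m > 0, ∃ e : ℤ ≃o X, ∀ i, (e (i + m) : ℤ) = e i + n := by
  classical
  have : Nonempty X := hX.to_subtype
  let t : X ≃o X :=
    { toEquiv := (Equiv.addRight n).subtypeEquiv fun p => (h p).symm
      map_rel_iff' := add_le_add_iff_right n }
  have : NoMaxOrder X := ⟨fun p => ⟨t p, (lt_add_of_pos_right (p : ℤ) hn :)⟩⟩
  have : NoMinOrder X := ⟨fun p => ⟨t.symm p, (sub_lt_self (p : ℤ) hn :)⟩⟩
  let : SuccOrder X := LinearLocallyFiniteOrder.succOrder X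
  let : PredOrder X := LinearLocallyFiniteOrder.predOrder X
  let e : X ≃o ℤ := orderIsoIntOfLinearSuccPredArch
  let g : ℤ ≃o ℤ := (e.symm.trans t).trans e
  have hg : ∀ i, g i = i + g 0 :=
    eq_add_of_strictMono_of_add_period g.strictMono one_pos g.map_succ
  have e_symm_add (i : ℤ) : e.symm (i + g 0) = t (e.symm i) := by
    rw [← hg]; exact e.symm_apply_apply _
  refine ⟨g 0, e.symm.lt_iff_lt.1 ?_, e.symm, fun i => congrArg Subtype.val (e_symm_add i)⟩
  rw [← zero_add (g 0), e_symm_add]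
  exact (lt_add_of_pos_right (e.symm 0 : ℤ) hn :)

/-- Some displacement `f i - i` has maximal absolute value `D`. From one displacement `D` the
hypothesis produces displacements `-D` at distance about `b` to the right, and conversely; as
`a < b`, it does so for two consecutive integers, and both values spread over a half-line. -/
theorem eq_self_of_sub_mem_Icc_iff {f : ℤ → ℤ} (hf : Function.Injective f) {a b B : ℤ}
    (hab : a < b) (hb : 0 ≤ b) (hB : ∀ i, |f i - i| ≤ B)
    (h : ∀ i j, j - f i ∈ Icc a b ↔ f j - i ∈ Icc a b) (i : ℤ) : f i = i := by
  obtain ⟨D, ⟨i₀, hi₀⟩, hD⟩ := Int.exists_greatest_of_bdd (P := fun D => ∃ i, |f i - i| = D)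
    ⟨B, by rintro _ ⟨i, rfl⟩; exact hB i⟩ ⟨_, 0, rfl⟩
  have abs_le_D (i : ℤ) : |f i - i| ≤ D := hD _ ⟨i, rfl⟩
  simp only [mem_Icc] at h
  have eq_add_of_eq_sub {j : ℤ} (hj : f j = j - D) : f (j - D - b) = j - b := by
    have := (h (j - D - b) j).2 (by lia)
    have := abs_le.1 (abs_le_D (j - D - b))
    lia
  have eq_sub_of_eq_add {i : ℤ} (hi : f i = i + D) : f (i + D + b) = i + b := by
    have := (h i (i + D + b)).1 (by lia)
    have := abs_le.1 (abs_le_D (i + D + b))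
    lia
  have eq_add_pred {i : ℤ} (hi : f i = i + D) : f (i - 1) = i - 1 + D := by
    have hne : f (i + D + b - 1) ≠ f (i + D + b) := fun h => by have := hf h; lia
    have hlast : f (i + D + b - 1) = i + D + b - 1 - D := by
      have := (h i (i + D + b - 1)).1 (by lia)
      have := abs_le.1 (abs_le_D (i + D + b - 1))
      have := eq_sub_of_eq_add hi
      lia
    convert eq_add_of_eq_sub hlast using 2 <;> lia
  obtain ⟨i₁, hi₁⟩ : ∃ i, f i = i + D := by
    rcases abs_choice (f i₀ - i₀) with h₀ | h₀
    · exact ⟨i₀, by lia⟩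
    · exact ⟨_, (eq_add_of_eq_sub (j := i₀) (by lia)).trans (by lia)⟩
  have eq_add_of_le {k : ℤ} (hk : k ≤ i₁) : f k = k + D := by
    induction k, hk using Int.leInductionDown with
    | base => exact hi₁
    | pred k _ ih => exact eq_add_pred ih
  have hD₀ : 0 ≤ D := (abs_nonneg _).trans (abs_le_D 0)
  have hleft := eq_sub_of_eq_add (eq_add_of_le (k := i₁ - (D + b)) (by lia))
  rw [add_assoc, sub_add_cancel] at hleft
  have := abs_le.1 (abs_le_D i)
  lia

end Int

section CircEnum

open RoundModel

variable {V : Type*} {M : SimpleGraph V} {P : RoundModel M} {K : Set V} {m c : ℤ}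
  {L : ℤ → V × ℤ}

/-- `L` lists, from left to right, all the lifts of a set of representatives of the classes of
vertices of `K` with equal `K`-traces; there are `m` classes. -/
structure IsListing (P : RoundModel M) (K : Set V) (m : ℤ) (L : ℤ → V × ℤ) : Prop where
  m_pos : 0 < m
  mem : ∀ i, (L i).1 ∈ K
  strictMono_lo : StrictMono fun i => P.lo (L i)
  apply_add : ∀ i, L (i + m) = shift 1 (L i)
  exists_trace_eq : ∀ v ∈ K, ∃ i, trace M K v = trace M K (L i).1
  fst_eq : ∀ i j, trace M K (L i).1 = trace M K (L j).1 → (L i).1 = (L j).1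

theorem exists_isListing (P : RoundModel M) (hK : K.Nonempty) : ∃ m L, IsListing P K m L := by
  obtain ⟨K', hK', hbij⟩ := Set.exists_subset_bijOn K (trace M K)
  have eq_of_lo_eq (x y : V × ℤ) (hx : x.1 ∈ K') (hy : y.1 ∈ K') (h : P.lo x = P.lo y) :
      x = y := by
    have hhi : P.hi x = P.hi y := (P.hi_mono h.le).antisymm (P.hi_mono h.ge)
    have htrace : P.SameTrace K x y := fun z _ => by
      rw [RoundModel.Rel, h, hhi, RoundModel.Rel]
    have hn := P.n_pos
    exact P.eq_of_fst_eq (hbij.injOn hx hy htrace.trace_eq) (by linarith) (by linarith)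
  have hne : (P.lo '' {x | x.1 ∈ K'}).Nonempty := by
    obtain ⟨u, hu, -⟩ := hbij.surjOn (hK.image _).some_mem
    exact ⟨_, (u, 0), hu, rfl⟩
  have add_mem_iff (p : ℤ) : p + P.n ∈ P.lo '' {x | x.1 ∈ K'} ↔ p ∈ P.lo '' {x | x.1 ∈ K'} := by
    refine ⟨?_, ?_⟩ <;> rintro ⟨x, hx, hp⟩
    · exact ⟨shift (-1) x, hx, by rw [lo_shift]; lia⟩
    · exact ⟨shift 1 x, hx, by rw [lo_shift]; lia⟩
  obtain ⟨m, hm, e, he⟩ := exists_orderIso_of_add_mem_iff hne P.n_pos add_mem_iff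
  choose L hL lo_L using fun i => (e i).2
  refine ⟨m, L, hm, fun i => hK' (hL i), ?_, ?_, ?_, fun i j h => hbij.injOn (hL i) (hL j) h⟩
  · intro i j hij
    simpa only [lo_L, Subtype.coe_lt_coe] using e.strictMono hij
  · refine fun i => eq_of_lo_eq _ _ (hL _) (hL i) ?_
    rw [lo_shift, lo_L, lo_L, he, one_mul]
  · intro v hv
    obtain ⟨u, hu, huv⟩ := hbij.surjOn (mem_image_of_mem _ hv)
    obtain ⟨i, hi⟩ := e.surjective ⟨_, (u, 0), hu, rfl⟩
    refine ⟨i, ?_⟩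
    rw [eq_of_lo_eq (L i) (u, 0) (hL i) hu (by rw [lo_L, hi]), huv]

namespace IsListing

theorem apply_add_mul (hL : IsListing P K m L) (i k : ℤ) : L (i + k * m) = shift k (L i) := by
  induction k using Int.induction_on with
  | zero => simp [shift]
  | succ k ih => rw [add_one_mul, ← add_assoc, hL.apply_add, ih]; simp [shift, add_assoc]
  | pred k ih =>
    have h := hL.apply_add (i + (-k - 1) * m)
    rw [add_assoc, ← add_one_mul, sub_add_cancel, ih] at h
    grind [shift]

theorem exists_eq_add_mul (hL : IsListing P K m L) {i : ℤ} {x : V × ℤ} (h : (L i).1 = x.1) :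
    ∃ k, x = L (i + k * m) := by
  refine ⟨x.2 - (L i).2, ?_⟩
  rw [hL.apply_add_mul]
  ext <;> simp [shift, h]

theorem exists_eq_add_mul_of_trace_eq (hL : IsListing P K m L) {i j : ℤ}
    (h : trace M K (L i).1 = trace M K (L j).1) : ∃ k, j = i + k * m := by
  obtain ⟨k, hk⟩ := hL.exists_eq_add_mul (hL.fst_eq i j h)
  exact ⟨k, hL.strictMono_lo.injective (congrArg P.lo hk)⟩

theorem lt_of_rel (hL : IsListing P K m L) {i j : ℤ} (h : P.Rel (L i) (L j)) : i < j :=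
  hL.strictMono_lo.lt_iff_lt.1 h.lo_lt

theorem rel_add_mul_iff (hL : IsListing P K m L) (k : ℤ) {i j : ℤ} :
    P.Rel (L (i + k * m)) (L (j + k * m)) ↔ P.Rel (L i) (L j) := by
  rw [hL.apply_add_mul, hL.apply_add_mul, P.rel_shift_shift]

theorem rel_add_iff (hL : IsListing P K m L) {i j : ℤ} :
    P.Rel (L j) (L (i + m)) ↔ P.Rel (L i) (L j) := by
  rw [hL.apply_add, P.rel_shift_one]

theorem exists_rel_of_adj (hL : IsListing P K m L) {i : ℤ} {v : V} (hv : v ∈ K)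
    (h : M.Adj (L i).1 v) : ∃ j, P.Rel (L i) (L j) ∧ trace M K v = trace M K (L j).1 := by
  obtain ⟨j, hj⟩ := hL.exists_trace_eq v hv
  obtain ⟨y, hy, hrel⟩ :=
    exists_rel_right (P := P) ((trace_congr hj (hL.mem i)).1 h.symm).symm
  obtain ⟨k, rfl⟩ := hL.exists_eq_add_mul hy.symm
  exact ⟨_, hrel, hj.trans (congrArg (trace M K) hy.symm)⟩

theorem trace_subset_of_forall_rel (hL : IsListing P K m L) {i i' : ℤ}
    (h : ∀ j, P.Rel (L i) (L j) → P.Rel (L i') (L j)) :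
    trace M K (L i).1 ⊆ trace M K (L i').1 := by
  rintro v ⟨hv, hadj⟩
  obtain ⟨j, hj, hvj⟩ := hL.exists_rel_of_adj hv hadj
  exact ⟨hv, ((trace_congr hvj (hL.mem i')).2 (h j hj).adj.symm).symm⟩

theorem exists_isLeast_rel (hL : IsListing P K m L) (hne : ∀ v ∈ K, (trace M K v).Nonempty)
    (i : ℤ) : ∃ p, IsLeast {j | P.Rel (L i) (L j)} p := by
  obtain ⟨v, hv, hadj⟩ := hne _ (hL.mem i)
  obtain ⟨j, hj, -⟩ := hL.exists_rel_of_adj hv hadj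
  exact Int.exists_least_of_bdd ⟨i, fun _ h => (hL.lt_of_rel h).le⟩ ⟨j, hj⟩

theorem strictMono_of_isLeast_rel (hL : IsListing P K m L) (hstiff : IsStiff M K) {p : ℤ → ℤ}
    (hp : ∀ i, IsLeast {j | P.Rel (L i) (L j)} (p i)) : StrictMono p := by
  intro i i' hii
  have hlo := hL.strictMono_lo.monotone hii.le
  have hle : p i ≤ p i' := by
    by_contra! hlt
    exact hlt.not_ge
      ((hp i).2 (uncross hlo (hL.strictMono_lo.monotone hlt.le) (hp i).1 (hp i').1).1)
  refine hle.lt_of_ne fun heq => ?_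
  have hsub := hL.trace_subset_of_forall_rel (i := i) (i' := i') fun j hj =>
    (uncross hlo (hL.strictMono_lo.monotone (heq ▸ (hp i).2 hj)) hj (hp i').1).2
  obtain ⟨k, rfl⟩ :=
    hL.exists_eq_add_mul_of_trace_eq (hstiff (hL.mem i) (hL.mem i') hsub)
  have hrel : P.Rel (L (i + k * m)) (L (p i - k * m + k * m)) := by
    rw [sub_add_cancel, heq]
    exact (hp _).1
  have : p i ≤ p i - k * m := (hp i).2 ((hL.rel_add_mul_iff k).1 hrel)
  lia

end IsListing

/-- In the listing `L` the `i`-th entry is related to those from `i + c` to `i + m - c`, so that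
the graph on the trace classes of `K` is a circulant. -/
structure IsCircEnum (P : RoundModel M) (K : Set V) (m c : ℤ) (L : ℤ → V × ℤ) : Prop
    extends IsListing P K m L where
  c_pos : 0 < c
  two_mul_c_le : 2 * c ≤ m
  rel_iff : ∀ i j, P.Rel (L i) (L j) ↔ j - i ∈ Icc c (m - c)

theorem exists_isCircEnum (P : RoundModel M) (hK : K.Nonempty)
    (hne : ∀ v ∈ K, (trace M K v).Nonempty) (hstiff : IsStiff M K) :
    ∃ m c L, IsCircEnum P K m c L := by
  obtain ⟨m, L, hL⟩ := exists_isListing P hK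
  choose p hp using hL.exists_isLeast_rel hne
  have p_add (i : ℤ) : p (i + m) = p i + m := by
    refine (hp (i + m)).unique ⟨?_, fun j hj => ?_⟩
    · simpa using (hL.rel_add_mul_iff 1).2 (hp i).1
    · have : p i ≤ j - m := (hp i).2 ((hL.rel_add_mul_iff 1).1 (by simpa using hj))
      lia
  have p_eq := eq_add_of_strictMono_of_add_period
    (hL.strictMono_of_isLeast_rel hstiff hp) hL.m_pos p_add
  have c_le {i j : ℤ} (h : P.Rel (L i) (L j)) : p 0 ≤ j - i := by
    have := (hp i).2 h
    have := p_eq i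
    lia
  have rel_iff (i j : ℤ) : P.Rel (L i) (L j) ↔ j - i ∈ Icc (p 0) (m - p 0) := by
    refine ⟨fun h => ⟨c_le h, ?_⟩, fun ⟨h, h'⟩ => ⟨?_, ?_⟩⟩
    · have := c_le (hL.rel_add_iff.2 h)
      lia
    · exact (hp i).1.1.trans_le (hL.strictMono_lo.monotone (by rw [p_eq]; lia))
    · have := (hp j).1.1.trans_le (hL.strictMono_lo.monotone (show p j ≤ i + m by rw [p_eq]; lia))
      simpa only [hL.apply_add, lo_shift, one_mul] using this
  have hp0 := (rel_iff 0 (p 0)).1 (hp 0).1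
  exact ⟨m, p 0, L, hL, hL.lt_of_rel (hp 0).1, by simp only [mem_Icc] at hp0; lia, rel_iff⟩

namespace IsCircEnum

theorem adj_iff (E : IsCircEnum P K m c L) {i j : ℤ} (hij : -c < j - i) (hji : j - i < m + c) :
    M.Adj (L i).1 (L j).1 ↔ j - i ∈ Icc c (m - c) := by
  rw [← E.rel_iff]
  refine ⟨fun h => ?_, Rel.adj⟩
  obtain ⟨y, hy, hrel⟩ := exists_rel_right (P := P) h
  obtain ⟨k, rfl⟩ := E.exists_eq_add_mul hy.symm
  obtain ⟨hc, hmc⟩ := (E.rel_iff _ _).1 hrel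
  have hk : k * m = 0 := Int.eq_zero_of_abs_lt_dvd (dvd_mul_left m k) (abs_lt.2 (by lia))
  rwa [hk, add_zero] at hrel

theorem trace_eq_of_eq_two_mul (E : IsCircEnum P K m c L) (hm : m = 2 * c) {u : V} (hu : u ∈ K) :
    ∀ z ∈ trace M K u, ∀ z' ∈ trace M K u, trace M K z = trace M K z' := by
  obtain ⟨i, hi⟩ := E.exists_trace_eq u hu
  rw [hi]
  have trace_eq (z : V) (hz : z ∈ trace M K (L i).1) : trace M K z = trace M K (L (i + c)).1 := by
    obtain ⟨j, hj, hzj⟩ := E.exists_rel_of_adj hz.1 hz.2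
    obtain ⟨hc, hmc⟩ := (E.rel_iff _ _).1 hj
    rw [hzj, show j = i + c by lia]
  exact fun z hz z' hz' => (trace_eq z hz).trans (trace_eq z' hz').symm

theorem isThick (E : IsCircEnum P K m c L) (hm : 2 * c < m) : IsThick M K := by
  intro u hu
  obtain ⟨i, hi⟩ := E.exists_trace_eq u hu
  have hc := E.c_pos
  have mem_trace_u {j : ℤ} (hj : j - i ∈ Icc c (m - c)) : (L j).1 ∈ trace M K u :=
    hi ▸ ⟨E.mem j, ((E.rel_iff i j).2 hj).adj⟩
  refine ⟨(L (i + c)).1, mem_trace_u (by simp only [mem_Icc]; lia), (L (i + c + 1)).1,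
    mem_trace_u (by simp only [mem_Icc]; lia), fun h => ?_⟩
  obtain ⟨k, hk⟩ := E.exists_eq_add_mul_of_trace_eq h
  have : m ∣ 1 := ⟨k, by linarith⟩
  have := Int.le_of_dvd one_pos this
  lia

theorem trace_nonempty (E : IsCircEnum P K m c L) (hm : 2 * c < m) (v : V) :
    (trace M K v).Nonempty := by
  obtain ⟨i, hi, hi'⟩ := exists_le_lt_add_one_of_strictMono E.strictMono_lo (P.lo (v, 0))
  have hrel : P.Rel (L i) (L (i + c + 1)) := (E.rel_iff _ _).2 (by simp only [mem_Icc]; lia)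
  have hrel' : P.Rel (L (i + 1)) (L (i + c + 1)) :=
    (E.rel_iff _ _).2 (by simp only [mem_Icc]; lia)
  exact ⟨_, E.mem _, (hrel.left_convex hrel' hi hi'.le).adj⟩

variable {τ : Equiv.Perm V}

theorem exists_trace_apply_eq (T : IsTwist M τ) (hK : ∀ v, τ v ∈ K ↔ v ∈ K)
    (E : IsCircEnum P K m c L) (i : ℤ) :
    ∃ j, |j - i| < c ∧ trace M K (τ (L i).1) = trace M K (L j).1 := by
  obtain ⟨j, hj⟩ := E.exists_trace_eq _ ((hK _).2 (E.mem i))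
  obtain ⟨k, ⟨hlt, hle⟩, -⟩ := existsUnique_add_zsmul_mem_Ioc E.m_pos j (i - c)
  rw [smul_eq_mul] at hlt hle
  have hjk : trace M K (τ (L i).1) = trace M K (L (j + k * m)).1 := by
    rw [hj, E.apply_add_mul]; rfl
  have hnot : ¬ M.Adj (L i).1 (L (j + k * m)).1 := fun h =>
    T.not_adj_apply _ ((trace_congr hjk (E.mem i)).2 h.symm)
  rw [E.adj_iff (by lia) (by have := E.c_pos; lia), mem_Icc] at hnot
  exact ⟨_, abs_lt.2 (by lia), hjk⟩

theorem trace_apply_of_mem (T : IsTwist M τ) (hK : ∀ v, τ v ∈ K ↔ v ∈ K)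
    (E : IsCircEnum P K m c L) (hm : 2 * c < m) {u : V} (hu : u ∈ K) :
    trace M K (τ u) = trace M K u := by
  choose f hlt hf using E.exists_trace_apply_eq T hK
  have hc := E.c_pos
  have hadj (i j : ℤ) : M.Adj (τ (L i).1) (L j).1 ↔ M.Adj (L (f i)).1 (L j).1 :=
    trace_congr (hf i) (E.mem j)
  have adj_comm (i j : ℤ) : M.Adj (L (f i)).1 (L j).1 ↔ M.Adj (L i).1 (L (f j)).1 := by
    rw [← hadj, T.adj_apply_comm, M.adj_comm, hadj, M.adj_comm]
  have sub_mem_iff (i j : ℤ) : j - f i ∈ Icc c (m - c) ↔ f j - i ∈ Icc c (m - c) := by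
    have hi := abs_lt.1 (hlt i)
    have hj := abs_lt.1 (hlt j)
    by_cases hij : -c < j - f i ∧ j - f i < m + c ∧ -c < f j - i ∧ f j - i < m + c
    · rw [← E.adj_iff hij.1 hij.2.1, ← E.adj_iff hij.2.2.1 hij.2.2.2, adj_comm]
    · simp only [mem_Icc]
      lia
  have f_inj : Function.Injective f := by
    intro i j hij
    have htrace : trace M K (L i).1 = trace M K (L j).1 := by
      refine τ.surjective.preimage_injective ?_
      rw [← T.trace_apply hK, ← T.trace_apply hK, hf, hf, hij]
    obtain ⟨k, rfl⟩ := E.exists_eq_add_mul_of_trace_eq htrace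
    have hi := abs_lt.1 (hlt i)
    have hj := abs_lt.1 (hlt (i + k * m))
    have hk : k * m = 0 := Int.eq_zero_of_abs_lt_dvd (dvd_mul_left m k) (abs_lt.2 (by lia))
    rw [hk, add_zero]
  obtain ⟨i, hi⟩ := E.exists_trace_eq u hu
  rw [T.trace_apply hK, hi, ← T.trace_apply hK, hf, eq_self_of_sub_mem_Icc_iff f_inj
    (by lia) (by lia) (fun i => (hlt i).le) sub_mem_iff]

end IsCircEnum

end CircEnum

section TwistIso

variable {V : Type*} [Finite V] {M : SimpleGraph V} {τ : Equiv.Perm V} {K : Set V} {r : V → V}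
  {m c : ℤ} {L : ℤ → V × ℤ}

/-- The two traces are nested, and have the same size. -/
theorem IsTwist.trace_apply_eq_of_swap {S : Set V} (T : IsTwist M τ) (hS : ∀ v, τ v ∈ S ↔ v ∈ S)
    {v : V} (hswap : ∀ w ∈ S, ∀ w' ∈ S,
      M.Adj v w' → M.Adj (τ v) w → ¬ M.Adj (τ v) w' → M.Adj v w) :
    trace M S (τ v) = trace M S v := by
  have hcard := T.ncard_trace_apply hS v
  by_cases h : trace M S v ⊆ trace M S (τ v)
  · exact (Set.eq_of_subset_of_ncard_le h hcard.le (Set.toFinite _)).symm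
  · obtain ⟨w', ⟨hw', hvw'⟩, hnw'⟩ := Set.not_subset.1 h
    refine Set.eq_of_subset_of_ncard_le (fun w ⟨hw, hvw⟩ => ⟨hw, ?_⟩) hcard.ge (Set.toFinite _)
    exact hswap w hw w' hw' hvw' hvw fun h => hnw' ⟨hw', h⟩

theorem IsCore.trace_apply_eq (T : IsTwist M τ) (hK : IsCore M τ K r) (P : RoundModel M)
    (hstiff : IsStiff M K) (hthick : IsThick M K)
    (hτ : ∀ u ∈ K, trace M K (τ u) = trace M K u) {v : V} (hv : (trace M K v).Nonempty) :
    trace M K (τ v) = trace M K v := by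
  have hrv : r v ∈ K := hK.map_mem hv.some_mem.2
  have hsub : trace M K (τ v) ⊆ trace M K (r v) := by
    rw [T.trace_apply hK.apply_mem_iff]
    intro x hx
    have hxK : x ∈ K := (hK.apply_mem_iff x).1 hx.1
    exact ⟨hxK, ((trace_congr (hτ x hxK) hrv).1 (hK.trace_subset v hx).2.symm).symm⟩
  ext w
  refine and_congr_right fun hw => ?_
  let S : Set V := {x ∈ K | trace M K x = trace M K w}
  have hS (x : V) : τ x ∈ S ↔ x ∈ S :=
    (and_congr_left' (hK.apply_mem_iff x)).trans (and_congr_right fun hx => by rw [hτ x hx])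
  have htrace : trace M S (τ v) = trace M S v := T.trace_apply_eq_of_swap hS
    fun y hy y' hy' => adj_of_swap_core P hstiff hthick hrv (hK.trace_subset v) hsub hy.1 hy'.1
      (hy.2.trans hy'.2.symm)
  exact trace_congr htrace ⟨hw, rfl⟩

theorem IsTwist.adj_apply_iff (T : IsTwist M τ) (P : RoundModel M) (hthick : IsThick M K)
    (hne : ∀ v, (trace M K v).Nonempty) (hτ : ∀ v, trace M K (τ v) = trace M K v) (v w : V) :
    M.Adj (τ v) w ↔ M.Adj v w := by
  let S : Set V := {x | τ.SameCycle w x}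
  have hS (x : V) : τ x ∈ S ↔ x ∈ S := Equiv.Perm.sameCycle_apply_right
  have htrace : trace M S (τ v) = trace M S v := by
    refine T.trace_apply_eq_of_swap hS fun y hy y' hy' => ?_
    obtain ⟨j, hj⟩ := hy.symm.trans hy'
    exact adj_of_swap P hthick (hτ v).symm (hne v) (mt .symm (T.not_adj_apply v))
      (by rw [← hj, apply_zpow_of_forall_apply hτ]) (hne y)
      (by rw [← hj]; exact mt .symm (T.not_adj_zpow j y))
  exact trace_congr htrace (.refl τ w)

theorem IsTwist.exists_perm (T : IsTwist M τ) (P : RoundModel M) :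
    ∃ f : Equiv.Perm V, ∀ u v, M.Adj (τ u) v ↔ M.Adj (f u) (f v) := by
  obtain ⟨K, r, hK, hstiff⟩ := T.exists_core
  rcases K.eq_empty_or_nonempty with rfl | hne
  · exact T.exists_perm_of_colorable (hK.orbitGraph_colorable T fun _ h => h.elim)
  obtain ⟨m, c, L, E⟩ := exists_isCircEnum P hne hK.trace_nonempty hstiff
  rcases E.two_mul_c_le.eq_or_lt' with hm | hm
  · exact T.exists_perm_of_colorable
      (hK.orbitGraph_colorable T fun _ hu => E.trace_eq_of_eq_two_mul hm hu)
  · refine ⟨Equiv.refl V, T.adj_apply_iff P (E.isThick hm) (E.trace_nonempty hm) fun v => ?_⟩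
    exact hK.trace_apply_eq T P hstiff (E.isThick hm)
      (fun u => E.trace_apply_of_mem T hK.apply_mem_iff hm) (E.trace_nonempty hm v)

end TwistIso

section Arc

variable {n : ℕ} {s e s' e' : ℤ}

theorem intCast_mem_image_Icc {p : ℤ} :
    (p : ZMod n) ∈ (Int.cast : ℤ → ZMod n) '' Icc s e ↔ ∃ k : ℤ, p + k * n ∈ Icc s e := by
  constructor
  · rintro ⟨x, hx, hxp⟩
    obtain ⟨k, hk⟩ := (ZMod.intCast_eq_intCast_iff_dvd_sub _ _ _).1 hxp.symm
    exact ⟨k, by rwa [show p + k * n = x by linarith]⟩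
  · rintro ⟨k, hk⟩
    exact ⟨_, hk, by simp⟩

theorem exists_eq_image_Icc_of_isArc {S : Set (ZMod n)} (hS : IsArc n S) (hne : S.Nonempty) :
    ∃ s e : ℤ, s ≤ e ∧ S = (Int.cast : ℤ → ZMod n) '' Icc s e := by
  obtain ⟨a, k, -, rfl⟩ := hS
  obtain ⟨y, rfl⟩ := ZMod.intCast_surjective a
  obtain ⟨_, i₀, hi₀, -⟩ := hne
  refine ⟨y, y + k - 1, by lia, Set.ext fun p => ?_⟩
  constructor
  · rintro ⟨i, hi, rfl⟩
    exact ⟨y + i, ⟨by lia, by lia⟩, by push_cast; rfl⟩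
  · rintro ⟨x, ⟨hyx, hxk⟩, rfl⟩
    lift x - y to ℕ using sub_nonneg.2 hyx with i hi
    obtain rfl : x = y + i := by lia
    exact ⟨i, by lia, by push_cast; rfl⟩

theorem image_Icc_subset_image_Icc {k : ℤ} (hs : s ≤ s' + k * n) (he : e' + k * n ≤ e) :
    (Int.cast : ℤ → ZMod n) '' Icc s' e' ⊆ (Int.cast : ℤ → ZMod n) '' Icc s e := by
  rintro _ ⟨x, ⟨hx, hx'⟩, rfl⟩
  exact intCast_mem_image_Icc.2 ⟨k, by linarith, by linarith⟩

theorem disjoint_image_Icc_iff (hn : 0 < n) (hse : s ≤ e) (hse' : s' ≤ e') :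
    Disjoint ((Int.cast : ℤ → ZMod n) '' Icc s e) ((Int.cast : ℤ → ZMod n) '' Icc s' e') ↔
      ∃ k : ℤ, e < s' + k * n ∧ e' + k * n < s + n := by
  have hn : (0 : ℤ) < n := mod_cast hn
  rw [Set.disjoint_left]
  constructor
  · intro h
    obtain ⟨k, ⟨hk, hk'⟩, -⟩ := existsUnique_add_zsmul_mem_Ico hn s' s
    rw [smul_eq_mul] at hk hk'
    refine ⟨k, ?_, ?_⟩ <;> by_contra! hle
    · exact h (intCast_mem_image_Icc.2 ⟨k, hk, hle⟩) (mem_image_of_mem _ ⟨le_rfl, hse'⟩)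
    · refine h (mem_image_of_mem _ ⟨le_rfl, hse⟩) (intCast_mem_image_Icc.2 ⟨1 - k, ?_, ?_⟩) <;>
        linarith
  · rintro ⟨k, hk, hk'⟩ _ ⟨x, ⟨hx, hx'⟩, rfl⟩ hmem
    obtain ⟨j, hj, hj'⟩ := intCast_mem_image_Icc.1 hmem
    have h1 : 0 < j + k := pos_of_mul_pos_left (b := (n : ℤ)) (by linarith) hn.le
    have h2 : j + k < 1 := lt_of_mul_lt_mul_right (a := (n : ℤ)) (by linarith) hn.le
    lia

theorem exists_roundModel_compl {V : Type*} {G : SimpleGraph V} (hG : IsPCAGraph G) :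
    Nonempty (RoundModel Gᶜ) := by
  obtain ⟨n, hn, l, -, harc, hsub, hadj⟩ := hG
  choose s e hse hl using fun v => exists_eq_image_Icc_of_isArc (harc v).2 (harc v).1
  have compl_adj_iff (u v : V) : Gᶜ.Adj u v ↔ Disjoint (l u) (l v) := by
    rw [SimpleGraph.compl_adj, Set.disjoint_iff_inter_eq_empty, ← Set.not_nonempty_iff_eq_empty]
    rcases eq_or_ne u v with rfl | huv
    · simp [(harc u).1]
    · simp [huv, hadj u v huv]
  refine ⟨⟨n, s, e, mod_cast hn, hse, fun u v k h => ?_, fun u v => ?_⟩⟩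
  · by_contra! hlt
    have hvu : l v ⊆ l u := by
      rw [hl, hl u]
      exact image_Icc_subset_image_Icc h hlt.le
    obtain rfl : v = u := by
      by_contra hne
      exact hsub v u hne hvu
    linarith
  · rw [compl_adj_iff, hl, hl v, disjoint_image_Icc_iff hn (hse u) (hse v)]

end Arc

theorem not_mem_closedNbhd_iff {V : Type*} {G : SimpleGraph V} {u v : V} :
    u ∉ ClosedNbhd G v ↔ Gᶜ.Adj u v := by
  rw [SimpleGraph.compl_adj, ← not_or]
  rfl

end CircularArc

/-- A proper circular-arc graph is reconstructible up to isomorphism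
from its closed neighborhood hypergraph: if `N[G] ≅ N[H]` as hypergraphs with
multiplicities (witnessed by bijections `φ`, `ψ` with `φ(N_G[v]) = N_H[ψ(v)]`), then
`G ≅ H`. -/
theorem stmt19 {V W : Type*} [Fintype V] [Fintype W]
    (G : SimpleGraph V) (H : SimpleGraph W) (hG : IsPCAGraph G)
    (φ ψ : V ≃ W)
    (h : ∀ v, (fun x => φ x) '' ClosedNbhd G v = ClosedNbhd H (ψ v)) :
    Nonempty (G ≃g H) := by
  let τ : Equiv.Perm V := ψ.trans φ.symm
  have apply_mem_iff (u v : V) : τ u ∈ ClosedNbhd G v ↔ ψ u ∈ ClosedNbhd H (ψ v) := by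
    rw [← h v]
    exact Set.mem_image_equiv.symm
  have compl_adj_iff (u v : V) : Gᶜ.Adj (τ u) v ↔ Hᶜ.Adj (ψ u) (ψ v) := by
    rw [← CircularArc.not_mem_closedNbhd_iff, ← CircularArc.not_mem_closedNbhd_iff, apply_mem_iff]
  have T : CircularArc.IsTwist Gᶜ τ :=
    { adj_apply_comm u v := by rw [compl_adj_iff, Gᶜ.adj_comm, compl_adj_iff, Hᶜ.adj_comm]
      not_adj_apply u := by rw [compl_adj_iff]; exact Hᶜ.irrefl }
  obtain ⟨P⟩ := CircularArc.exists_roundModel_compl hG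
  obtain ⟨f, hf⟩ := T.exists_perm P
  let e : V ≃ W := f.symm.trans ψ
  let e_compl : Gᶜ ↪g Hᶜ := ⟨e, fun {a b} => by simp [e, ← compl_adj_iff, hf]⟩
  exact ⟨e, (SimpleGraph.Embedding.complEquiv.symm e_compl).map_rel_iff⟩
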